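/- Let A ∈ ℝ^{n×n} be symmetric positive semidefinite. Then for any p-dimensional subspace W of ℝⁿ (1 ≤ p ≤ n) there exists a continuous path t ∈ [0,1] ↦ W_t ∈ G(p,n) (continuity measured via the orthogonal projections P_{W_t}) such that W₀ = W, W₁ maximizes f(V) = tr(A P_V) over G(p,n), and the function t ↦ f(W_t) is non-decreasing. -/

import Mathlib

open Matrix Finset

/-- Orthogonal projection matrices whose trace (equivalently, rank) is `r`. -/
structure IsOrthProj {n : Type*} [Fintype n] (r : ℝ) (P : Matrix n n ℝ) : Prop where
  symm : P.IsSymm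
  idem : P * P = P
  trace : P.trace = r

/-- `Q` can be reached from `P` along a continuous path of orthogonal projections of trace `r`
on which `tr (A ·)` does not decrease. -/
def Ascends {n : Type*} [Fintype n] (A : Matrix n n ℝ) (r : ℝ) (P Q : Matrix n n ℝ) : Prop :=
  ∃ γ : ℝ → Matrix n n ℝ, Continuous γ ∧ γ 0 = P ∧ γ 1 = Q ∧
    (∀ t ∈ Set.Icc (0 : ℝ) 1, IsOrthProj r (γ t)) ∧
    MonotoneOn (fun t => (A * γ t).trace) (Set.Icc 0 1)

section

variable {n : Type*} [Fintype n] {A P Q R U : Matrix n n ℝ} {r : ℝ}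

theorem IsOrthProj.sum_sq_col (h : IsOrthProj r P) (j : n) : ∑ i, P i j ^ 2 = P j j := by
  conv_rhs => rw [← h.idem, Matrix.mul_apply]
  refine sum_congr rfl fun i _ => ?_
  rw [h.symm.apply i j, sq]

theorem IsOrthProj.diag_nonneg (h : IsOrthProj r P) (j : n) : 0 ≤ P j j := by
  rw [← h.sum_sq_col]
  positivity

theorem IsOrthProj.diag_le_one (h : IsOrthProj r P) (j : n) : P j j ≤ 1 := by
  have := h.sum_sq_col j
  have h2 : P j j ^ 2 ≤ ∑ i, P i j ^ 2 :=
    single_le_sum (f := fun i => P i j ^ 2) (fun i _ => sq_nonneg _) (mem_univ j)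
  nlinarith

theorem IsOrthProj.col_eq_zero (h : IsOrthProj r P) {j : n} (hj : P j j = 0) (i : n) :
    P i j = 0 := by
  have := h.sum_sq_col j
  rw [hj, sum_eq_zero_iff_of_nonneg fun i _ => sq_nonneg _] at this
  exact pow_eq_zero_iff two_ne_zero |>.1 (this i (mem_univ i))

theorem IsOrthProj.col_eq_zero_of_ne (h : IsOrthProj r P) {i j : n} (hj : P j j = 1)
    (hij : i ≠ j) : P i j = 0 := by
  classical
  have := h.sum_sq_col j
  rw [← add_sum_erase _ _ (mem_univ j), hj, one_pow, add_eq_left,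
    sum_eq_zero_iff_of_nonneg fun i _ => sq_nonneg _] at this
  exact pow_eq_zero_iff two_ne_zero |>.1 (this i (mem_erase.2 ⟨hij, mem_univ i⟩))

theorem Matrix.trace_eq_rank_of_mul_self [DecidableEq n] (hi : P * P = P) :
    P.trace = P.rank := by
  have hid : IsIdempotentElem P.toLin' := by
    rw [IsIdempotentElem, Module.End.mul_eq_comp, ← Matrix.toLin'_mul, hi]
  have h := (LinearMap.IsIdempotentElem.isProj_range _ hid).trace
  rwa [Matrix.trace_toLin'_eq] at h

theorem Ascends.refl (hP : IsOrthProj r P) : Ascends A r P P :=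
  ⟨fun _ => P, continuous_const, rfl, rfl, fun _ _ => hP, monotoneOn_const⟩

theorem Ascends.right (h : Ascends A r P Q) : IsOrthProj r Q := by
  obtain ⟨γ, -, -, h1, h, -⟩ := h
  exact h1 ▸ h 1 (by simp)

theorem Ascends.trans (hPQ : Ascends A r P Q) (hQR : Ascends A r Q R) : Ascends A r P R := by
  obtain ⟨γ, hc, h0, h1, hγ, hm⟩ := hPQ
  obtain ⟨δ, kc, k0, k1, hδ, km⟩ := hQR
  have hmin : ∀ t ∈ Set.Icc (0 : ℝ) 1, min (2 * t) 1 ∈ Set.Icc (0 : ℝ) 1 := fun t ht =>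
    ⟨le_min (by linarith [ht.1]) zero_le_one, min_le_right _ _⟩
  have hmax : ∀ t ∈ Set.Icc (0 : ℝ) 1, max (2 * t - 1) 0 ∈ Set.Icc (0 : ℝ) 1 := fun t ht =>
    ⟨le_max_right _ _, max_le (by linarith [ht.2]) zero_le_one⟩
  refine ⟨fun t => γ (min (2 * t) 1) + δ (max (2 * t - 1) 0) - Q, by fun_prop, ?_, ?_, ?_, ?_⟩
  · norm_num [h0, k0]
  · norm_num [h1, k1]
  · intro t ht
    rcases le_total (2 * t) 1 with h | h
    · have := hγ _ (hmin t ht)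
      simpa [max_eq_right (sub_nonpos.2 h), k0] using this
    · have := hδ _ (hmax t ht)
      simpa [min_eq_right h, h1] using this
  · intro s hs t ht hst
    have a := hm (hmin s hs) (hmin t ht) (min_le_min_right _ (by linarith))
    have b := km (hmax s hs) (hmax t ht) (max_le_max_right _ (by linarith))
    simp only [mul_add, mul_sub, Matrix.trace_add, Matrix.trace_sub] at a b ⊢
    linarith

theorem IsOrthProj.sub_vecMulVec_add (hP : IsOrthProj r P) {w v : n → ℝ}
    (hw : P *ᵥ w = w) (hw1 : w ⬝ᵥ w = 1) (hv1 : v ⬝ᵥ v = 1)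
    (hv : P *ᵥ v = (w ⬝ᵥ v) • w) :
    IsOrthProj r (P - vecMulVec w w + vecMulVec v v) := by
  have hT : Pᵀ = P := hP.symm
  have hw' : w ᵥ* P = w := by rw [← mulVec_transpose, hT, hw]
  have hv' : v ᵥ* P = (w ⬝ᵥ v) • w := by rw [← mulVec_transpose, hT, hv]
  refine ⟨?_, ?_, ?_⟩
  · simp [Matrix.IsSymm, hT, transpose_vecMulVec]
  · simp only [add_mul, mul_add, sub_mul, mul_sub, mul_vecMulVec, vecMulVec_mul,
      vecMulVec_mulVec, op_smul_eq_smul, hP.idem, hw, hw', hv, hv', hw1, hv1, one_smul,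
      dotProduct_comm v w, smul_vecMulVec, vecMulVec_smul]
    abel
  · simp [trace_vecMulVec, hw1, hv1, hP.trace]

variable [DecidableEq n] {d : n → ℝ}

theorem Ascends.rotate (hP : IsOrthProj r P) {k : n} {w : n → ℝ}
    (hw : P *ᵥ w = w) (hw1 : w ⬝ᵥ w = 1) (hk : ∀ i, P i k = w k * w i) (hk0 : 0 ≤ w k)
    (hd : ∀ i, w i ≠ 0 → d i ≤ d k) :
    ∃ Q, Ascends (diagonal d) r P Q ∧ Q k k = 1 ∧
      ∀ i, w i = 0 → i ≠ k → Q i i = P i i := by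
  have hsum : ∑ i, w i ^ 2 = 1 := by simpa [dotProduct, sq] using hw1
  have hsplit := hsum
  rw [← add_sum_erase _ _ (mem_univ k)] at hsplit
  have hrest : 0 ≤ ∑ i ∈ univ.erase k, w i ^ 2 := sum_nonneg fun i _ => sq_nonneg _
  rcases eq_or_lt_of_le (show w k ≤ 1 by nlinarith) with h1 | h1
  · exact ⟨P, .refl hP, by rw [hk, h1, mul_one], fun _ _ _ => rfl⟩
  set a : ℝ → ℝ := fun t => w k + t * (1 - w k) with ha
  set b : ℝ → ℝ := fun t => √(1 - a t ^ 2) / √(1 - w k ^ 2) with hb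
  have hpos : 0 < 1 - w k ^ 2 := by nlinarith
  set e : n → ℝ := Pi.single k 1 with he
  set x : n → ℝ := w - w k • e with hx
  have hac : Continuous a := by fun_prop
  have hbc : Continuous b := by fun_prop
  have ha0 : ∀ t ∈ Set.Icc (0 : ℝ) 1, 0 ≤ a t ∧ a t ≤ 1 := fun t ht =>
    ⟨by have := ht.1; simp only [ha]; nlinarith, by have := ht.2; simp only [ha]; nlinarith⟩
  have hb2 : ∀ t ∈ Set.Icc (0 : ℝ) 1, b t ^ 2 * (1 - w k ^ 2) = 1 - a t ^ 2 := fun t ht => by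
    have := ha0 t ht
    simp only [hb]
    rw [div_pow, Real.sq_sqrt hpos.le, Real.sq_sqrt (by nlinarith), div_mul_cancel₀ _ hpos.ne']
  have hwe : w ⬝ᵥ e = w k := by simp [he]
  have hee : e ⬝ᵥ e = 1 := by simp [he]
  have hxe : x ⬝ᵥ e = 0 := by simp [hx, sub_dotProduct, hwe, hee]
  have hwx : w ⬝ᵥ x = 1 - w k ^ 2 := by simp [hx, dotProduct_sub, hw1, hwe, sq]
  have hxx : x ⬝ᵥ x = 1 - w k ^ 2 := by
    rw [← hwx, hx, sub_dotProduct, ← hx, smul_dotProduct, dotProduct_comm e, hxe]; simp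
  have hPe : P *ᵥ e = w k • w := by
    ext i
    simp [he, hk]
  have hPx : P *ᵥ x = (1 - w k ^ 2) • w := by
    rw [hx, mulVec_sub, mulVec_smul, hw, hPe, smul_smul, sub_smul, one_smul, sq]
  have hxk : x k = 0 := by simp [hx, he]
  have hxi : ∀ i, i ≠ k → x i = w i := fun i hi => by simp [hx, he, hi]
  set v : ℝ → n → ℝ := fun t => a t • e + b t • x with hv
  have hvc : Continuous v := by fun_prop
  have hv0 : v 0 = w := by
    simp [hv, ha, hb, hx, div_self (Real.sqrt_pos.2 hpos).ne']
  have hv1 : v 1 = e := by simp [hv, ha, hb]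
  have hvk : ∀ t, v t k = a t := fun t => by simp [hv, hxk, he]
  have hvi : ∀ t i, i ≠ k → v t i = b t * w i := fun t i hi => by simp [hv, hxi i hi, he, hi]
  refine ⟨P - vecMulVec w w + vecMulVec e e,
    ⟨fun t => P - vecMulVec w w + vecMulVec (v t) (v t), ?_, ?_, ?_, ?_, ?_⟩, ?_, ?_⟩
  · exact continuous_const.add (hvc.matrix_vecMulVec hvc)
  · simp [hv0]
  · simp [hv1]
  · intro t ht
    refine hP.sub_vecMulVec_add hw hw1 ?_ ?_
    · simp only [hv, add_dotProduct, dotProduct_add, smul_dotProduct, dotProduct_smul, hee, hxx,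
        hxe, dotProduct_comm e x, smul_eq_mul]
      linear_combination hb2 t ht
    · simp only [hv, mulVec_add, mulVec_smul, hPe, hPx, dotProduct_add, dotProduct_smul, hwe, hwx,
        smul_smul, add_smul, smul_eq_mul]
  · have hle : ∑ i ∈ univ.erase k, d i * w i ^ 2 ≤ d k * (1 - w k ^ 2) := by
      rw [← hsplit, add_sub_cancel_left, mul_sum]
      refine sum_le_sum fun i _ => ?_
      by_cases hi : w i = 0
      · simp [hi]
      · exact mul_le_mul_of_nonneg_right (hd i hi) (sq_nonneg _)
    have htr : ∀ t, (diagonal d * vecMulVec (v t) (v t)).trace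
        = d k * a t ^ 2 + b t ^ 2 * ∑ i ∈ univ.erase k, d i * w i ^ 2 := fun t => by
      simp only [Matrix.trace, diag_apply, diagonal_mul, vecMulVec_apply]
      rw [← add_sum_erase _ _ (mem_univ k), hvk, mul_sum, sq]
      congr 1
      refine sum_congr rfl fun i hi => ?_
      rw [hvi t i (ne_of_mem_erase hi)]
      ring
    intro s hs t ht hst
    have hst' : a s ≤ a t := by simp only [ha]; nlinarith
    have hb' : b t ^ 2 ≤ b s ^ 2 := by
      have := hb2 s hs
      have := hb2 t ht
      have := ha0 s hs
      refine le_of_mul_le_mul_right (a := 1 - w k ^ 2) ?_ hpos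
      nlinarith
    have := mul_le_mul_of_nonneg_left hle (sub_nonneg.2 hb')
    simp only [mul_add, Matrix.trace_add, htr]
    linear_combination this + d k * hb2 s hs - d k * hb2 t ht
  · simp [vecMulVec_apply, he, hk]
  · intro i hi hik
    simp [vecMulVec_apply, he, hi, hik]

theorem IsOrthProj.exists_unit_vector (hP : IsOrthProj r P) {S : Finset n}
    (hS : ∀ i ∈ S, P i i = 1) (hcard : (#S : ℝ) < r) (k : n) (hkS : k ∉ S) :
    ∃ w : n → ℝ, P *ᵥ w = w ∧ w ⬝ᵥ w = 1 ∧ (∀ i, P i k = w k * w i) ∧ 0 ≤ w k ∧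
      ∀ i ∈ S, w i = 0 := by
  obtain ⟨j, hjS, hj, hjk⟩ : ∃ j ∉ S, 0 < P j j ∧ (j = k ∨ P k k = 0) := by
    rcases (hP.diag_nonneg k).eq_or_lt with h | h
    · by_contra! hc
      have hz : ∀ j ∉ S, P j j = 0 := fun j hj => (hP.diag_nonneg j).eq_or_lt.elim Eq.symm
        fun h' => absurd h.symm (hc j hj h').2
      have : P.trace = #S := by
        simp only [Matrix.trace, diag_apply]
        rw [← sum_subset (subset_univ S) fun j _ hj => hz j hj, sum_congr rfl hS]
        simp
      linarith [hP.trace]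
    · exact ⟨k, hkS, h, .inl rfl⟩
  have hss : √(P j j) * √(P j j) = P j j := Real.mul_self_sqrt hj.le
  have hzero : ∀ i ∈ S, P i j = 0 := fun i hi => by
    rw [← hP.symm.apply]
    exact hP.col_eq_zero_of_ne (hS i hi) fun h => hjS (h ▸ hi)
  refine ⟨fun i => P i j / √(P j j), ?_, ?_, fun i => ?_, ?_, fun i hi => by simp [hzero i hi]⟩
  · ext i
    simp only [mulVec, dotProduct, ← mul_div_assoc, ← sum_div]
    rw [← Matrix.mul_apply, hP.idem]
  · simp only [dotProduct, div_mul_div_comm, ← sum_div, hss]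
    simp only [← sq]
    rw [hP.sum_sq_col, div_self hj.ne']
  · rcases hjk with rfl | h
    · rw [div_mul_div_comm, hss, mul_div_assoc, mul_div_cancel₀]
      exact hj.ne'
    · simp [hP.col_eq_zero h, ← hP.symm.apply k j]
  · rcases hjk with rfl | h
    · positivity
    · simp [← hP.symm.apply k j, hP.col_eq_zero h]

theorem Ascends.exists_diag_eq_one (hP : IsOrthProj r P) (m : ℕ) (hm : (m : ℝ) ≤ r)
    (hmn : m ≤ Fintype.card n) :
    ∃ (S : Finset n) (Q : Matrix n n ℝ), #S = m ∧ (∀ i ∈ S, ∀ j ∉ S, d j ≤ d i) ∧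
      Ascends (diagonal d) r P Q ∧ ∀ i ∈ S, Q i i = 1 := by
  induction m with
  | zero => exact ⟨∅, P, by simp, by simp, .refl hP, by simp⟩
  | succ m ih =>
    push_cast at hm
    obtain ⟨S, Q, hS, hd, hPQ, hQ⟩ := ih (by linarith) (by omega)
    have hne : Sᶜ.Nonempty := by rw [← card_pos, card_compl]; omega
    obtain ⟨k, hk, hmax⟩ := exists_max_image Sᶜ d hne
    simp only [mem_compl] at hk hmax
    obtain ⟨w, hw, hw1, hwk, hk0, hwS⟩ :=
      hPQ.right.exists_unit_vector hQ (by rw [hS]; linarith) k hk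
    obtain ⟨R, hQR, hRk, hR⟩ := Ascends.rotate (d := d) hPQ.right hw hw1 hwk hk0
      fun i hi => hmax i fun h => hi (hwS i h)
    refine ⟨insert k S, R, by rw [card_insert_of_notMem hk, hS], ?_, hPQ.trans hQR, ?_⟩
    · intro i hi j hj
      rw [mem_insert, not_or] at hj
      rcases mem_insert.1 hi with rfl | hi
      · exact hmax j hj.2
      · exact hd i hi j hj.2
    · intro i hi
      rcases mem_insert.1 hi with rfl | hi
      · exact hRk
      · rw [hR i (hwS i hi) fun h => hk (h ▸ hi), hQ i hi]

theorem IsOrthProj.trace_diagonal_mul_le (hP : IsOrthProj r P) (hQ : IsOrthProj r Q)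
    {S : Finset n} (hS : (#S : ℝ) = r) (hne : S.Nonempty) (hd : ∀ i ∈ S, ∀ j ∉ S, d j ≤ d i)
    (hP1 : ∀ i ∈ S, P i i = 1) : (diagonal d * Q).trace ≤ (diagonal d * P).trace := by
  obtain ⟨k, hk, hmin⟩ := exists_min_image S d hne
  have hP0 : ∀ i ∉ S, P i i = 0 := fun i hi => by
    have h := hP.trace
    simp only [Matrix.trace, diag_apply] at h
    rw [← sum_add_sum_compl S, sum_congr rfl fun i hi => hP1 i hi] at h
    simp only [sum_const, nsmul_eq_mul, mul_one, hS, add_eq_left] at h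
    rw [sum_eq_zero_iff_of_nonneg fun i _ => hP.diag_nonneg i] at h
    exact h i (mem_compl.2 hi)
  have key : 0 ≤ ∑ i, (d i - d k) * (P i i - Q i i) := sum_nonneg fun i _ => by
    by_cases hi : i ∈ S
    · rw [hP1 i hi]
      exact mul_nonneg (sub_nonneg.2 (hmin i hi)) (sub_nonneg.2 (hQ.diag_le_one i))
    · rw [hP0 i hi]
      exact mul_nonneg_of_nonpos_of_nonpos (sub_nonpos.2 (hd k hk i hi))
        (by linarith [hQ.diag_nonneg i])
  have hPt : ∑ i, P i i = r := hP.trace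
  have hQt : ∑ i, Q i i = r := hQ.trace
  simp only [sub_mul, mul_sub, sum_sub_distrib, ← mul_sum, hPt, hQt] at key
  simp only [Matrix.trace, diag_apply, diagonal_mul]
  linarith

theorem IsOrthProj.conj (hP : IsOrthProj r P) (hU : Uᵀ * U = 1) :
    IsOrthProj r (U * P * Uᵀ) := by
  refine ⟨?_, ?_, ?_⟩
  · simp [Matrix.IsSymm, hP.symm.eq, Matrix.mul_assoc]
  · calc U * P * Uᵀ * (U * P * Uᵀ) = U * P * (Uᵀ * U) * P * Uᵀ := by simp only [Matrix.mul_assoc]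
      _ = U * P * Uᵀ := by rw [hU, Matrix.mul_one, Matrix.mul_assoc U, hP.idem]
  · rw [Matrix.trace_mul_comm, ← Matrix.mul_assoc, hU, Matrix.one_mul, hP.trace]

theorem Matrix.IsHermitian.exists_orthogonal_diagonalization (hA : A.IsHermitian) :
    ∃ (U : Matrix n n ℝ) (d : n → ℝ), Uᵀ * U = 1 ∧ U * Uᵀ = 1 ∧ A = U * diagonal d * Uᵀ := by
  have hs := hA.spectral_theorem
  rw [Unitary.conjStarAlgAut_apply] at hs
  refine ⟨hA.eigenvectorUnitary, hA.eigenvalues, ?_, ?_, ?_⟩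
  · simpa [star_eq_conjTranspose] using Unitary.coe_star_mul_self hA.eigenvectorUnitary
  · simpa [star_eq_conjTranspose] using Unitary.coe_mul_star_self hA.eigenvectorUnitary
  · simpa [star_eq_conjTranspose] using hs

end

/-- For a symmetric PSD matrix `A` and any rank-p orthogonal projection `P₀`
(t ↦ P_t a continuous curve of rank-p orthogonal projections), there is a
continuous path `P_t` of rank-p orthogonal projections with `P₀` as start,
`P₁` a maximizer of `V ↦ tr(A P_V)` over the Grassmannian, and
`t ↦ tr(A P_t)` non-decreasing on `[0,1]`. -/
theorem stmt4 (n p : ℕ) (hp : 1 ≤ p) (hpn : p ≤ n)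
    (A : Matrix (Fin n) (Fin n) ℝ) (hA : A.PosSemidef)
    (P0 : Matrix (Fin n) (Fin n) ℝ)
    (hP0symm : P0.IsSymm) (hP0idem : P0 * P0 = P0) (hP0rank : P0.rank = p) :
    ∃ P : ℝ → Matrix (Fin n) (Fin n) ℝ,
      Continuous P ∧ P 0 = P0 ∧
      (∀ t ∈ Set.Icc (0 : ℝ) 1, (P t).IsSymm ∧ P t * P t = P t ∧ (P t).rank = p) ∧
      (∀ Q : Matrix (Fin n) (Fin n) ℝ, Q.IsSymm → Q * Q = Q → Q.rank = p →
        (A * Q).trace ≤ (A * P 1).trace) ∧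
      (∀ s t : ℝ, s ∈ Set.Icc (0 : ℝ) 1 → t ∈ Set.Icc (0 : ℝ) 1 → s ≤ t →
        (A * P s).trace ≤ (A * P t).trace) := by
  obtain ⟨U, d, hU, hU', hAd⟩ := hA.1.exists_orthogonal_diagonalization
  have hP0 : IsOrthProj (p : ℝ) P0 :=
    ⟨hP0symm, hP0idem, by rw [Matrix.trace_eq_rank_of_mul_self hP0idem, hP0rank]⟩
  have hUT : Uᵀᵀ * Uᵀ = 1 := by rwa [transpose_transpose]
  have hconj : ∀ X : Matrix (Fin n) (Fin n) ℝ,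
      (A * X).trace = (diagonal d * (Uᵀ * X * U)).trace := fun X => by
    rw [hAd, Matrix.mul_assoc, Matrix.mul_assoc, Matrix.trace_mul_comm]
    simp only [Matrix.mul_assoc]
  have hinv : ∀ X : Matrix (Fin n) (Fin n) ℝ, Uᵀ * (U * X * Uᵀ) * U = X := fun X => by
    calc Uᵀ * (U * X * Uᵀ) * U = (Uᵀ * U) * X * (Uᵀ * U) := by simp only [Matrix.mul_assoc]
      _ = X := by rw [hU, Matrix.one_mul, Matrix.mul_one]
  obtain ⟨S, Q, hS, hd, ⟨γ, hc, h0, h1, hγ, hm⟩, hQ⟩ :=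
    Ascends.exists_diag_eq_one (d := d) (hP0.conj hUT) p le_rfl (by simpa using hpn)
  refine ⟨fun t => U * γ t * Uᵀ, by fun_prop, ?_, ?_, ?_, ?_⟩
  · calc U * γ 0 * Uᵀ = (U * Uᵀ) * P0 * (U * Uᵀ) := by
          simp only [h0, transpose_transpose, Matrix.mul_assoc]
      _ = P0 := by rw [hU', Matrix.one_mul, Matrix.mul_one]
  · intro t ht
    have h := (hγ t ht).conj hU
    refine ⟨h.symm, h.idem, ?_⟩
    exact_mod_cast (Matrix.trace_eq_rank_of_mul_self h.idem).symm.trans h.trace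
  · intro R hRs hRi hRr
    have hR : IsOrthProj (p : ℝ) R :=
      ⟨hRs, hRi, by rw [Matrix.trace_eq_rank_of_mul_self hRi, hRr]⟩
    have hR' := hR.conj hUT
    rw [transpose_transpose] at hR'
    rw [hconj, hconj, hinv, h1]
    exact (h1 ▸ hγ 1 (by simp)).trace_diagonal_mul_le hR' (by rw [hS])
      (card_pos.1 (by omega)) hd hQ
  · intro s t hs ht hst
    rw [hconj, hconj, hinv, hinv]
    exact hm hs ht hst
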